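/- arXiv:1603.09365 — 2 statements merged into one kernel-verified Lean document; each statement's English description precedes it below -/
import Mathlib

section
/- For every k ≥ 1 and every finite coloring of FIN_{≤k} (the union of FIN_j for j = 1,…,k), there exists an infinite block sequence (b_n) in FIN_k such that the tetris subspace TS_j(b_n) is monochromatic for every j = 1,2,…,k. -/
/-- `FIN k`: finitely supported functions `ℕ → {0,…,k}` attaining the maximum value `k`. -/
def FIN (k : ℕ) : Set (ℕ → ℕ) :=
  {b | (∀ n, b n ≤ k) ∧ {n | b n ≠ 0}.Finite ∧ ∃ n, b n = k}

/-- `Supp b < Supp b'`: every element of the support of `b` is smaller than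
every element of the support of `b'`. -/
def SuppLT (b b' : ℕ → ℕ) : Prop :=
  ∀ m, b m ≠ 0 → ∀ m', b' m' ≠ 0 → m < m'

/-- `f` is (the extension to `ℕ` of) a nondecreasing surjection `{0,…,k} → {0,…,j}`. -/
def IsTetrisFn (k j : ℕ) (f : ℕ → ℕ) : Prop :=
  (∀ i i', i' ≤ i → i ≤ k → f i' ≤ f i) ∧ (∀ i, i ≤ k → f i ≤ j) ∧
    ∀ m, m ≤ j → ∃ i, i ≤ k ∧ f i = m

/-- An infinite block sequence in `FIN k`. -/
def IsBlockSeq (k : ℕ) (b : ℕ → ℕ → ℕ) : Prop :=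
  (∀ n, b n ∈ FIN k) ∧ ∀ n, SuppLT (b n) (b (n + 1))

/-- The tetris subspace `TS_j(b_n)` of `FIN j` generated by a block sequence in `FIN k`:
all elements of `FIN j` of the form `f_0 ∘ b_0 + ⋯ + f_n ∘ b_n`, where `f_i` is a
nondecreasing surjection `{0,…,k} → {0,…,j_i}` and `max {j_0,…,j_n} = j`. -/
def TS (k j : ℕ) (b : ℕ → ℕ → ℕ) : Set (ℕ → ℕ) :=
  {a | a ∈ FIN j ∧ ∃ (n : ℕ) (js : ℕ → ℕ) (fs : ℕ → ℕ → ℕ),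
    (∀ i, i ≤ n → js i ≤ j ∧ IsTetrisFn k (js i) (fs i)) ∧
    (∃ i, i ≤ n ∧ js i = j) ∧
    a = ∑ i ∈ Finset.range (n + 1), (fs i) ∘ (b i)}

/-!
Ultrafilters on `ℕ → ℕ` form a compact semigroup in which `U ↦ U + V` is continuous, and tetris
operations act on those that concentrate on some `FIN j` and on functions with support arbitrarily
far out. The Galvin–Glazer method needs such ultrafilters `u j`, one for each level `j`, that are
mapped to each other by all tetris operations and satisfy `u i + u j = u (max i j)` for `i, j ≤ k`.
Then `u 0, …, u k` form a finite semigroup. If `A` is large for all of them, and `a ∈ A` is such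
that, for each `j ≤ k`, `a + b ∈ A` for `u j`-almost all `b`, then almost all these `a + b` have
the same property as `a`. Hence `u k`-almost every `b` can be chosen as the next block, under all
tetris operations at once. For a coloring, `A` consists of the functions that have, among those of
their level `j`, the `u j`-almost sure color.

The dilations `t j = j • u` of an idempotent `u` at level `1` are coherent idempotents. The sums
`t j + ⋯ + t 0` and `t 0 + ⋯ + t j` of coherent idempotents are again coherent: a nondecreasing
surjection `f` turns `t 0 + ⋯ + t j` into `t (f 0) + ⋯ + t (f j)`, in which repeated summands
collapse. The descending sums witness that certain closed semigroups of coherent sequences are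
nonempty, and idempotents of these semigroups satisfy `t j + t i = t j` for more and more of the
indices `i ≤ j`. Once this holds for all `i ≤ k`, the ascending sums are the required `u j`.
-/

open Filter

attribute [local instance] Ultrafilter.add Ultrafilter.addSemigroup

/-! ### Nondecreasing surjections -/

namespace IsTetrisFn

variable {k j : ℕ} {f : ℕ → ℕ}

theorem map_zero (hf : IsTetrisFn k j f) : f 0 = 0 := by
  obtain ⟨i, hi, h⟩ := hf.2.2 0 (Nat.zero_le _)
  exact Nat.le_zero.1 (h ▸ hf.1 i 0 (Nat.zero_le _) hi)

theorem map_top (hf : IsTetrisFn k j f) : f k = j := by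
  obtain ⟨i, hi, h⟩ := hf.2.2 j le_rfl
  exact le_antisymm (hf.2.1 k le_rfl) (h ▸ hf.1 k i hi le_rfl)

theorem congr {g : ℕ → ℕ} (hf : IsTetrisFn k j f) (h : ∀ x ≤ k, g x = f x) :
    IsTetrisFn k j g := by
  refine ⟨fun i i' hi' hi => ?_, fun i hi => ?_, fun m hm => ?_⟩
  · rw [h i hi, h i' (hi'.trans hi)]
    exact hf.1 i i' hi' hi
  · rw [h i hi]
    exact hf.2.1 i hi
  · obtain ⟨i, hi, rfl⟩ := hf.2.2 m hm
    exact ⟨i, hi, h i hi⟩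

theorem restrict {l : ℕ} (hf : IsTetrisFn k j f) (hl : l ≤ k) : IsTetrisFn l (f l) f := by
  refine ⟨fun i i' hi' hi => hf.1 i i' hi' (hi.trans hl), fun i hi => hf.1 l i hi hl,
    fun m hm => ?_⟩
  obtain ⟨i, hi, rfl⟩ := hf.2.2 m (hm.trans (hf.2.1 l hl))
  rcases le_total i l with hil | hli
  · exact ⟨i, hil, rfl⟩
  · exact ⟨l, le_rfl, le_antisymm (hf.1 i l hli hi) hm⟩

theorem le (hf : IsTetrisFn k j f) : j ≤ k := by
  have hsurj : Finset.Iic j ⊆ (Finset.Iic k).image f := fun m hm => by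
    simpa using hf.2.2 m (Finset.mem_Iic.1 hm)
  simpa using (Finset.card_le_card hsurj).trans Finset.card_image_le

theorem eq_or_eq_succ (hf : IsTetrisFn (k + 1) j f) : j = f k ∨ j = f k + 1 := by
  have hmono : f k ≤ j := hf.2.1 k k.le_succ
  by_contra! hne
  obtain ⟨i, hi, hfi⟩ := hf.2.2 (f k + 1) (by omega)
  rcases hi.lt_or_eq with hlt | rfl
  · have := hf.1 k i (by omega) k.le_succ
    omega
  · exact hne.2 (hf.map_top ▸ hfi)

end IsTetrisFn

/-- The nondecreasing surjections with domain `{0,…,k}`, normalized to be constant beyond `k`; this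
makes them a finite set that still contains every tetris operation on `FIN k`. -/
def truncatedTetris (k : ℕ) : Set (ℕ → ℕ) :=
  {f | (∃ j, IsTetrisFn k j f) ∧ ∀ x, f (min x k) = f x}

theorem finite_truncatedTetris (k : ℕ) : (truncatedTetris k).Finite := by
  refine (Set.finite_range fun (g : Fin (k + 1) → Fin (k + 1)) (x : ℕ) =>
    (g ⟨min x k, by omega⟩ : ℕ)).subset ?_
  rintro f ⟨⟨j, hf⟩, htrunc⟩
  refine ⟨fun x => ⟨f x, Nat.lt_succ_of_le ?_⟩, funext htrunc⟩
  exact (hf.2.1 x (Nat.le_of_lt_succ x.2)).trans hf.le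

theorem IsTetrisFn.comp_min_mem_truncatedTetris {k j : ℕ} {f : ℕ → ℕ} (hf : IsTetrisFn k j f) :
    (fun x => f (min x k)) ∈ truncatedTetris k :=
  ⟨⟨j, hf.congr fun x hx => by rw [min_eq_left hx]⟩, fun x => by simp⟩

/-! ### Ordered sums in a semigroup -/

section OrderedSums

variable {M : Type*} [AddSemigroup M] {t : ℕ → M}

/-- The sum `t j + ⋯ + t 1 + t 0`. -/
def descSum (t : ℕ → M) : ℕ → M
  | 0 => t 0
  | j + 1 => t (j + 1) + descSum t j

/-- The sum `t 0 + t 1 + ⋯ + t j`. -/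
def ascSum (t : ℕ → M) : ℕ → M
  | 0 => t 0
  | j + 1 => ascSum t j + t (j + 1)

theorem add_descSum_self {j : ℕ} (hid : t j + t j = t j) : t j + descSum t j = descSum t j := by
  cases j with
  | zero => exact hid
  | succ j => rw [descSum, ← add_assoc, hid]

theorem ascSum_add_self {j : ℕ} (hid : t j + t j = t j) : ascSum t j + t j = ascSum t j := by
  cases j with
  | zero => exact hid
  | succ j => rw [ascSum, add_assoc, hid]

theorem descSum_comp_of_isTetrisFn (hid : ∀ j, t j + t j = t j) {j i : ℕ} {f : ℕ → ℕ}
    (hf : IsTetrisFn j i f) : descSum (t ∘ f) j = descSum t i := by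
  induction j generalizing i with
  | zero =>
    obtain rfl : i = 0 := Nat.le_zero.1 hf.le
    exact congrArg t hf.map_zero
  | succ j ih =>
    rw [descSum, ih (hf.restrict j.le_succ), Function.comp_apply, hf.map_top]
    rcases hf.eq_or_eq_succ with rfl | rfl
    · exact add_descSum_self (hid _)
    · rfl

theorem ascSum_comp_of_isTetrisFn (hid : ∀ j, t j + t j = t j) {j i : ℕ} {f : ℕ → ℕ}
    (hf : IsTetrisFn j i f) : ascSum (t ∘ f) j = ascSum t i := by
  induction j generalizing i with
  | zero =>
    obtain rfl : i = 0 := Nat.le_zero.1 hf.le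
    exact congrArg t hf.map_zero
  | succ j ih =>
    rw [ascSum, ih (hf.restrict j.le_succ), Function.comp_apply, hf.map_top]
    rcases hf.eq_or_eq_succ with rfl | rfl
    · exact ascSum_add_self (hid _)
    · rfl

theorem descSum_add_eq_of_le {n j : ℕ} {a : M} (hn : descSum t n + a = descSum t n)
    (hnj : n ≤ j) : descSum t j + a = descSum t j := by
  induction j, hnj using Nat.le_induction with
  | base => exact hn
  | succ j _ ih => rw [descSum, add_assoc, ih]

/-- `t j` absorbs on the right every `t i` with `i < n` and `i ≤ j`. For `n = k + 1` this is the
half of the relations `t i + t j = t (max i j)` in which the larger index comes first. -/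
def RightAbsorbing (n : ℕ) (t : ℕ → M) : Prop :=
  ∀ i < n, ∀ j, i ≤ j → t j + t i = t j

namespace RightAbsorbing

variable {n i j : ℕ}

theorem descSum_eq (ht : RightAbsorbing n t) (hi : i ≤ n) : descSum t i = t i := by
  induction i with
  | zero => rfl
  | succ i ih => rw [descSum, ih (by omega), ht i hi _ i.le_succ]

theorem add_ascSum (ht : RightAbsorbing n t) (hi : i < n) (hij : i ≤ j) :
    t j + ascSum t i = t j := by
  induction i with
  | zero => exact ht 0 hi j hij
  | succ i ih => rw [ascSum, ← add_assoc, ih (by omega) (by omega), ht _ hi j hij]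

theorem ascSum_add_ascSum_of_ge (ht : RightAbsorbing n t) (hi : i < n) (hij : i ≤ j) :
    ascSum t j + ascSum t i = ascSum t j := by
  cases j with
  | zero =>
    obtain rfl : i = 0 := Nat.le_zero.1 hij
    exact ht.add_ascSum hi le_rfl
  | succ j => rw [ascSum, add_assoc, ht.add_ascSum hi hij]

theorem ascSum_add_ascSum_of_le (ht : RightAbsorbing n t) (hi : i < n) (hij : i ≤ j) :
    ascSum t i + ascSum t j = ascSum t j := by
  induction j, hij using Nat.le_induction with
  | base => exact ht.ascSum_add_ascSum_of_ge hi le_rfl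
  | succ j _ ih => rw [ascSum, ← add_assoc, ih]

theorem ascSum_add_ascSum (ht : RightAbsorbing n t) (hi : i < n) (hj : j < n) :
    ascSum t i + ascSum t j = ascSum t (i ⊔ j) := by
  rcases le_total i j with hij | hji
  · rw [sup_of_le_right hij, ht.ascSum_add_ascSum_of_le hi hij]
  · rw [sup_of_le_left hji, ht.ascSum_add_ascSum_of_ge hj hji]

theorem succ_of_agree {s : ℕ → M} (ht : RightAbsorbing n t) (hid : t n + t n = t n)
    (hst : ∀ i ≤ n, s i = t i) (hs : ∀ j, n ≤ j → s j + t n = s j) :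
    RightAbsorbing (n + 1) s := by
  intro i hi j hij
  have hin : i ≤ n := Nat.le_of_lt_succ hi
  rw [hst i hin]
  rcases hin.lt_or_eq with hlt | rfl
  · rcases le_total j n with hjn | hnj
    · rw [hst j hjn, ht i hlt j hij]
    · rw [← hs j hnj, add_assoc, ht i hlt n hin]
  · exact hs j hij

end RightAbsorbing

end OrderedSums

/-! ### Absorbing idempotents in compact semigroups -/

section CompactSemigroup

variable {M : Type*} [AddSemigroup M] [TopologicalSpace M] [CompactSpace M] [T2Space M]
  {C : Set (ℕ → M)}

theorem exists_idempotent_agree_absorb (hcont : ∀ a : M, Continuous (· + a)) (hC : IsClosed C)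
    (hadd : ∀ s ∈ C, ∀ s' ∈ C, s + s' ∈ C) {t : ℕ → M} {n : ℕ}
    (hid : ∀ i ≤ n, t i + t i = t i)
    (hne : ∃ s ∈ C, (∀ i ≤ n, s i = t i) ∧ ∀ j, n ≤ j → s j + t n = s j) :
    ∃ s ∈ C, s + s = s ∧ (∀ i ≤ n, s i = t i) ∧ ∀ j, n ≤ j → s j + t n = s j := by
  let T : Set (ℕ → M) := {s | s ∈ C ∧ (∀ i ≤ n, s i = t i) ∧ ∀ j, n ≤ j → s j + t n = s j}
  have hclosed : IsClosed T := by
    simp only [T, Set.ofPred_and, Set.ofPred_forall]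
    refine hC.inter (IsClosed.inter ?_ ?_)
    · exact isClosed_biInter fun i _ => isClosed_eq (continuous_apply i) continuous_const
    · exact isClosed_biInter fun j _ =>
        isClosed_eq ((hcont (t n)).comp (continuous_apply j)) (continuous_apply j)
  have hsub : ∀ s ∈ T, ∀ s' ∈ T, s + s' ∈ T := by
    rintro s ⟨hs, hst, -⟩ s' ⟨hs', hst', habs'⟩
    refine ⟨hadd s hs s' hs', fun i hi => ?_, fun j hj => ?_⟩
    · rw [Pi.add_apply, hst i hi, hst' i hi, hid i hi]
    · rw [Pi.add_apply, add_assoc, habs' j hj]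
  obtain ⟨s, ⟨hs, hst, habs⟩, hss⟩ := exists_idempotent_in_compact_add_subsemigroup
    (fun r : ℕ → M => continuous_pi fun j => (hcont (r j)).comp (continuous_apply j))
    T hne hclosed.isCompact hsub
  exact ⟨s, hs, hss, hst, habs⟩

theorem exists_idempotent_rightAbsorbing (hcont : ∀ a : M, Continuous (· + a)) (hC : IsClosed C)
    (hadd : ∀ s ∈ C, ∀ s' ∈ C, s + s' ∈ C)
    (hdesc : ∀ s ∈ C, s + s = s → descSum s ∈ C) (hne : ∃ s ∈ C, s + s = s) (n : ℕ) :
    ∃ t ∈ C, t + t = t ∧ RightAbsorbing n t := by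
  induction n with
  | zero =>
    obtain ⟨t, ht, hid⟩ := hne
    exact ⟨t, ht, hid, fun i hi => absurd hi i.not_lt_zero⟩
  | succ n ih =>
    obtain ⟨t, ht, hid, habs⟩ := ih
    have hidj : ∀ j, t j + t j = t j := congrFun hid
    have hdescn : descSum t n + t n = descSum t n := by rw [habs.descSum_eq le_rfl, hidj]
    obtain ⟨s, hs, hss, hst, hsabs⟩ := exists_idempotent_agree_absorb hcont hC hadd
      (fun i _ => hidj i) ⟨descSum t, hdesc t ht hid, fun i hi => habs.descSum_eq hi,
        fun j hj => descSum_add_eq_of_le hdescn hj⟩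
    exact ⟨s, hs, hss, habs.succ_of_agree (hidj n) hst hsabs⟩

end CompactSemigroup

/-! ### Images of ultrafilters -/

theorem continuous_ultrafilter_map {α β : Type*} (f : α → β) :
    Continuous (Ultrafilter.map f) :=
  ultrafilterBasis_is_basis.continuous_iff.2 <| Set.forall_mem_range.mpr fun s =>
    ultrafilter_isOpen_basic (f ⁻¹' s)

theorem ultrafilter_map_add {M N : Type*} [Add M] [Add N] {U V : Ultrafilter M} {f : M → N}
    (h : ∀ᶠ a in U, ∀ᶠ b in V, f (a + b) = f a + f b) :
    (U + V).map f = U.map f + V.map f := by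
  refine Ultrafilter.coe_inj.mp (Filter.ext' fun p => ?_)
  change (∀ᶠ a in U, ∀ᶠ b in V, p (f (a + b))) ↔ ∀ᶠ a in U, ∀ᶠ b in V, p (f a + f b)
  refine eventually_congr ?_
  filter_upwards [h] with a ha
  refine eventually_congr ?_
  filter_upwards [ha] with b hb
  rw [hb]

/-! ### Ultrafilters on `FIN j` -/

theorem eq_of_mem_FIN {i j : ℕ} {b : ℕ → ℕ} (hi : b ∈ FIN i) (hj : b ∈ FIN j) : i = j := by
  obtain ⟨n, rfl⟩ := hi.2.2
  obtain ⟨m, rfl⟩ := hj.2.2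
  exact le_antisymm (hj.1 n) (hi.1 m)

theorem eq_zero_of_mem_FIN_zero {b : ℕ → ℕ} (hb : b ∈ FIN 0) : b = 0 :=
  funext fun n => Nat.le_zero.1 (hb.1 n)

theorem single_one_mem_FIN (n : ℕ) : (Pi.single n 1 : ℕ → ℕ) ∈ FIN 1 := by
  refine ⟨fun m => ?_, (Set.finite_singleton n).subset fun m hm => ?_, n, Pi.single_eq_same n 1⟩
  · by_cases h : m = n <;> simp [h]
  · by_contra h
    exact hm (Pi.single_eq_of_ne h 1)

theorem mul_comp_mem_FIN {b : ℕ → ℕ} {i : ℕ} (j : ℕ) (hb : b ∈ FIN i) :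
    (j * ·) ∘ b ∈ FIN (j * i) := by
  obtain ⟨hle, hfin, n, hn⟩ := hb
  exact ⟨fun m => Nat.mul_le_mul_left j (hle m),
    hfin.subset fun m hm h0 => hm (by simp [h0]), n, by simp [hn]⟩

theorem sup_mem_FIN {i j : ℕ} {b b' : ℕ → ℕ} (hb : b ∈ FIN i) (hb' : b' ∈ FIN j) :
    b ⊔ b' ∈ FIN (i ⊔ j) := by
  obtain ⟨hle, hfin, n, hn⟩ := hb
  obtain ⟨hle', hfin', n', hn'⟩ := hb'
  refine ⟨fun m => sup_le_sup (hle m) (hle' m), (hfin.union hfin').subset fun m hm => ?_, ?_⟩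
  · by_contra! hcon
    simp_all
  · rcases le_total i j with hij | hji
    · exact ⟨n', by simp [hn', (hle n').trans hij, hij]⟩
    · exact ⟨n, by simp [hn, (hle' n).trans hji, hji]⟩

namespace SuppLT

variable {b b' : ℕ → ℕ}

theorem eq_zero_or_eq_zero (h : SuppLT b b') (n : ℕ) : b n = 0 ∨ b' n = 0 := by
  by_contra! hne
  exact lt_irrefl n (h n hne.1 n hne.2)

theorem comp_add {f : ℕ → ℕ} (h : SuppLT b b') (hf : f 0 = 0) :
    f ∘ (b + b') = f ∘ b + f ∘ b' := by
  funext n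
  rcases h.eq_zero_or_eq_zero n with h0 | h0 <;> simp [h0, hf]

theorem add_eq_sup (h : SuppLT b b') : b + b' = b ⊔ b' := by
  funext n
  rcases h.eq_zero_or_eq_zero n with h0 | h0 <;> simp [h0]

end SuppLT

/-- The ultrafilters concentrating on `FIN j` and on functions with support arbitrarily far out. -/
def GammaFIN (j : ℕ) : Set (Ultrafilter (ℕ → ℕ)) :=
  {U | (∀ᶠ b : ℕ → ℕ in U, b ∈ FIN j) ∧ ∀ n, ∀ᶠ b : ℕ → ℕ in U, ∀ m < n, b m = 0}

section GammaFIN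

variable {i j : ℕ} {U V : Ultrafilter (ℕ → ℕ)}

theorem isClosed_gammaFIN (j : ℕ) : IsClosed (GammaFIN j) := by
  simp only [GammaFIN, Set.ofPred_and, Set.ofPred_forall]
  exact (ultrafilter_isClosed_basic _).inter
    (isClosed_iInter fun n => ultrafilter_isClosed_basic _)

theorem gammaFIN_one_nonempty : (GammaFIN 1).Nonempty := by
  refine ⟨(hyperfilter ℕ).map fun n => Pi.single n 1,
    eventually_map.2 (Eventually.of_forall single_one_mem_FIN),
    fun n => eventually_map.2 ?_⟩
  have hge : ∀ᶠ m in hyperfilter ℕ, n ≤ m :=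
    Nat.hyperfilter_le_atTop (eventually_ge_atTop n)
  filter_upwards [hge] with m hm l hl
  exact Pi.single_eq_of_ne (hl.trans_le hm).ne 1

theorem eventually_suppLT (hU : U ∈ GammaFIN j) {b : ℕ → ℕ} (hb : b ∈ FIN i) :
    ∀ᶠ b' in U, SuppLT b b' := by
  obtain ⟨N, hN⟩ := hb.2.1.bddAbove
  filter_upwards [hU.2 (N + 1)] with b' hb' m hm m' hm'
  by_contra! hle
  exact hm' (hb' m' (Nat.lt_succ_of_le (hle.trans (hN hm))))

theorem eventually_eventually_suppLT (hU : U ∈ GammaFIN i) (hV : V ∈ GammaFIN j) :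
    ∀ᶠ b in U, ∀ᶠ b' in V, SuppLT b b' :=
  hU.1.mono fun _ hb => eventually_suppLT hV hb

theorem add_mem_gammaFIN (hU : U ∈ GammaFIN i) (hV : V ∈ GammaFIN j) :
    U + V ∈ GammaFIN (i ⊔ j) := by
  refine ⟨?_, fun n => ?_⟩ <;> rw [Ultrafilter.eventually_add]
  · filter_upwards [hU.1, eventually_eventually_suppLT hU hV] with b hb hlt
    filter_upwards [hV.1, hlt] with b' hb' h
    exact h.add_eq_sup ▸ sup_mem_FIN hb hb'
  · filter_upwards [hU.2 n] with b hb
    filter_upwards [hV.2 n] with b' hb' m hm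
    simp [hb m hm, hb' m hm]

theorem map_add_of_mem_gammaFIN (hU : U ∈ GammaFIN i) (hV : V ∈ GammaFIN j) {f : ℕ → ℕ}
    (hf : f 0 = 0) : (U + V).map (f ∘ ·) = U.map (f ∘ ·) + V.map (f ∘ ·) :=
  ultrafilter_map_add <| (eventually_eventually_suppLT hU hV).mono fun _ h =>
    h.mono fun _ hlt => hlt.comp_add hf

theorem exists_idempotent_mem_gammaFIN_one : ∃ U ∈ GammaFIN 1, U + U = U :=
  exists_idempotent_in_compact_add_subsemigroup Ultrafilter.continuous_add_left _
    gammaFIN_one_nonempty (isClosed_gammaFIN 1).isCompact fun _ hU _ hV => by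
      simpa using add_mem_gammaFIN hU hV

theorem map_mul_mem_gammaFIN (j : ℕ) (hU : U ∈ GammaFIN i) :
    U.map ((j * ·) ∘ ·) ∈ GammaFIN (j * i) := by
  refine ⟨hU.1.mono fun b hb => mul_comp_mem_FIN j hb, fun n => (hU.2 n).mono fun b hb m hm => ?_⟩
  simp [hb m hm]

end GammaFIN

/-! ### Coherent sequences of ultrafilters -/

/-- A sequence of ultrafilters `t j ∈ GammaFIN j` such that every generalized tetris operation
`FIN j → FIN i` maps `t j` to `t i`. -/
structure IsCoherent (t : ℕ → Ultrafilter (ℕ → ℕ)) : Prop where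
  mem_gammaFIN : ∀ j, t j ∈ GammaFIN j
  map_eq : ∀ {j i f}, IsTetrisFn j i f → (t j).map (f ∘ ·) = t i

theorem isClosed_setOf_isCoherent : IsClosed {t | IsCoherent t} := by
  have hcoh : {t | IsCoherent t} = {t | (∀ j, t j ∈ GammaFIN j) ∧
      ∀ j i f, IsTetrisFn j i f → (t j).map (f ∘ ·) = t i} :=
    Set.ext fun t => ⟨fun h => ⟨h.1, fun _ _ _ => h.2⟩, fun h => ⟨h.1, h.2 _ _ _⟩⟩
  simp only [hcoh, Set.ofPred_and, Set.ofPred_forall]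
  refine IsClosed.inter ?_ ?_
  · exact isClosed_iInter fun j => (isClosed_gammaFIN j).preimage (continuous_apply j)
  · exact isClosed_iInter fun j => isClosed_iInter fun i => isClosed_iInter fun f =>
      isClosed_iInter fun _ => isClosed_eq
        ((continuous_ultrafilter_map _).comp (continuous_apply j)) (continuous_apply i)

theorem isCoherent_map_mul {U : Ultrafilter (ℕ → ℕ)} (hU : U ∈ GammaFIN 1) :
    IsCoherent fun j => U.map ((j * ·) ∘ ·) := by
  refine ⟨fun j => by simpa using map_mul_mem_gammaFIN j hU, fun {j i f} hf => ?_⟩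
  rw [Ultrafilter.map_map]
  refine Ultrafilter.coe_inj.mp (Filter.map_congr (hU.1.mono fun b hb => funext fun n => ?_))
  rcases Nat.le_one_iff_eq_zero_or_eq_one.1 (hb.1 n) with hn | hn
  · simp [hn, hf.map_zero]
  · simp [hn, hf.map_top]

theorem exists_isCoherent_idempotent : ∃ t, IsCoherent t ∧ t + t = t := by
  obtain ⟨U, hU, hid⟩ := exists_idempotent_mem_gammaFIN_one
  refine ⟨_, isCoherent_map_mul hU, funext fun j => ?_⟩
  rw [Pi.add_apply, ← map_add_of_mem_gammaFIN hU hU (mul_zero j), hid]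

namespace IsCoherent

variable {s t : ℕ → Ultrafilter (ℕ → ℕ)}

theorem add (hs : IsCoherent s) (ht : IsCoherent t) : IsCoherent (s + t) := by
  refine ⟨fun j => ?_, fun {j i f} hf => ?_⟩
  · simpa using add_mem_gammaFIN (hs.mem_gammaFIN j) (ht.mem_gammaFIN j)
  · rw [Pi.add_apply, map_add_of_mem_gammaFIN (hs.mem_gammaFIN j) (ht.mem_gammaFIN j) hf.map_zero,
      hs.map_eq hf, ht.map_eq hf, Pi.add_apply]

theorem descSum_mem_gammaFIN (ht : IsCoherent t) (j : ℕ) : descSum t j ∈ GammaFIN j := by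
  induction j with
  | zero => exact ht.mem_gammaFIN 0
  | succ j ih => simpa [descSum] using add_mem_gammaFIN (ht.mem_gammaFIN (j + 1)) ih

theorem ascSum_mem_gammaFIN (ht : IsCoherent t) (j : ℕ) : ascSum t j ∈ GammaFIN j := by
  induction j with
  | zero => exact ht.mem_gammaFIN 0
  | succ j ih => simpa [ascSum] using add_mem_gammaFIN ih (ht.mem_gammaFIN (j + 1))

theorem map_descSum (ht : IsCoherent t) {j i : ℕ} {f : ℕ → ℕ} (hf : IsTetrisFn j i f) :
    (descSum t j).map (f ∘ ·) = descSum (t ∘ f) j := by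
  induction j generalizing i with
  | zero => exact ht.map_eq (hf.restrict le_rfl)
  | succ j ih =>
    rw [descSum, map_add_of_mem_gammaFIN (ht.mem_gammaFIN _) (ht.descSum_mem_gammaFIN j)
      hf.map_zero, ih (hf.restrict j.le_succ), ht.map_eq (hf.restrict le_rfl)]
    rfl

theorem map_ascSum (ht : IsCoherent t) {j i : ℕ} {f : ℕ → ℕ} (hf : IsTetrisFn j i f) :
    (ascSum t j).map (f ∘ ·) = ascSum (t ∘ f) j := by
  induction j generalizing i with
  | zero => exact ht.map_eq (hf.restrict le_rfl)
  | succ j ih =>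
    rw [ascSum, map_add_of_mem_gammaFIN (ht.ascSum_mem_gammaFIN j) (ht.mem_gammaFIN _)
      hf.map_zero, ih (hf.restrict j.le_succ), ht.map_eq (hf.restrict le_rfl)]
    rfl

theorem isCoherent_descSum (ht : IsCoherent t) (hid : t + t = t) : IsCoherent (descSum t) :=
  ⟨ht.descSum_mem_gammaFIN, fun hf =>
    (ht.map_descSum hf).trans (descSum_comp_of_isTetrisFn (congrFun hid) hf)⟩

theorem isCoherent_ascSum (ht : IsCoherent t) (hid : t + t = t) : IsCoherent (ascSum t) :=
  ⟨ht.ascSum_mem_gammaFIN, fun hf =>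
    (ht.map_ascSum hf).trans (ascSum_comp_of_isTetrisFn (congrFun hid) hf)⟩

end IsCoherent

theorem exists_isCoherent_add_eq_sup (k : ℕ) :
    ∃ u, IsCoherent u ∧ ∀ i ≤ k, ∀ j ≤ k, u i + u j = u (i ⊔ j) := by
  obtain ⟨t, ht, hid, habs⟩ := exists_idempotent_rightAbsorbing Ultrafilter.continuous_add_left
    isClosed_setOf_isCoherent (fun _ hs _ hs' => hs.add hs')
    (fun _ hs hid => hs.isCoherent_descSum hid) exists_isCoherent_idempotent (k + 1)
  exact ⟨ascSum t, ht.isCoherent_ascSum hid, fun i hi j hj =>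
    habs.ascSum_add_ascSum (Nat.lt_succ_of_le hi) (Nat.lt_succ_of_le hj)⟩

/-! ### Sums in a set that is large for a semigroup of ultrafilters -/

/-- The elements of `A` whose translates by `V`-almost all `b` stay in `A`, for every `V ∈ 𝒱`: the
set usually written `A*` in the Galvin–Glazer argument, for a set `𝒱` of ultrafilters instead of a
single idempotent. -/
def starSet {M : Type*} [Add M] (𝒱 : Set (Ultrafilter M)) (A : Set M) : Set M :=
  {a ∈ A | ∀ V ∈ 𝒱, ∀ᶠ b in V, a + b ∈ A}

theorem zero_mem_starSet {M : Type*} [AddZeroClass M] {𝒱 : Set (Ultrafilter M)} {A : Set M}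
    (h0 : 0 ∈ A) (hA : ∀ V ∈ 𝒱, A ∈ V) : 0 ∈ starSet 𝒱 A :=
  ⟨h0, fun V hV => by simpa using hA V hV⟩

section StarSet

variable {M ι : Type*} [AddSemigroup M] {𝒱 : Set (Ultrafilter M)} {A : Set M}

theorem eventually_add_mem_starSet (hfin : 𝒱.Finite) (hadd : ∀ V ∈ 𝒱, ∀ W ∈ 𝒱, V + W ∈ 𝒱)
    {a : M} (ha : a ∈ starSet 𝒱 A) {V : Ultrafilter M} (hV : V ∈ 𝒱) :
    ∀ᶠ b in V, a + b ∈ starSet 𝒱 A := by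
  refine (ha.2 V hV).and (hfin.eventually_all.2 fun W hW => ?_)
  have hVW : ∀ᶠ b in V, ∀ᶠ b' in W, a + (b + b') ∈ A := ha.2 _ (hadd V hV W hW)
  simpa only [add_assoc] using hVW

theorem eventually_forall_add_mem_starSet {N : Type*} {U : Ultrafilter N} (hfin : 𝒱.Finite)
    (hadd : ∀ V ∈ 𝒱, ∀ W ∈ 𝒱, V + W ∈ 𝒱) {I : Set ι} (hI : I.Finite) {φ : ι → N → M}
    (hφ : ∀ i ∈ I, U.map (φ i) ∈ 𝒱) {S : Set M} (hS : S.Finite) (hSA : S ⊆ starSet 𝒱 A) :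
    ∀ᶠ b in U, ∀ a ∈ S, ∀ i ∈ I, a + φ i b ∈ starSet 𝒱 A :=
  hS.eventually_all.2 fun _ ha => hI.eventually_all.2 fun i hi =>
    eventually_add_mem_starSet hfin hadd (hSA ha) (hφ i hi)

end StarSet

theorem exists_seq_forall_sum_mem {M N ι : Type*} [AddCommMonoid M] {U : Ultrafilter N}
    {R : N → N → Prop} (hR : ∀ᶠ a in U, ∀ᶠ b in U, R a b) {𝒱 : Set (Ultrafilter M)}
    (hfin : 𝒱.Finite) (hadd : ∀ V ∈ 𝒱, ∀ W ∈ 𝒱, V + W ∈ 𝒱) {I : Set ι} (hI : I.Finite)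
    {φ : ι → N → M} (hφ : ∀ i ∈ I, U.map (φ i) ∈ 𝒱) {A : Set M} (h0 : 0 ∈ A)
    (hA : ∀ V ∈ 𝒱, A ∈ V) :
    ∃ b : ℕ → N, (∀ n, R (b n) (b (n + 1))) ∧
      ∀ n (i : ℕ → ι), (∀ m < n, i m ∈ I) → ∑ m ∈ Finset.range n, φ (i m) (b m) ∈ A := by
  -- A state is the last block together with the finite set of all sums formed so far.
  let State := {p : N × Set M // (∀ᶠ b in U, R p.1 b) ∧ p.2.Finite ∧ p.2 ⊆ starSet 𝒱 A}
  have hstep : ∀ p : State, ∃ p' : State, R p.1.1 p'.1.1 ∧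
      p'.1.2 = Set.image2 (fun a i => a + φ i p'.1.1) p.1.2 I := by
    rintro ⟨⟨a, S⟩, ha, hS, hSA⟩
    obtain ⟨b, hab, hb, hbS⟩ := (ha.and (hR.and
      (eventually_forall_add_mem_starSet hfin hadd hI hφ hS hSA))).exists
    exact ⟨⟨(b, _), hb, hS.image2 _ hI, Set.image2_subset_iff.2 hbS⟩, hab, rfl⟩
  choose next hnextR hnextS using hstep
  obtain ⟨a₀, ha₀⟩ := hR.exists
  let start : State := ⟨(a₀, {0}), ha₀, Set.finite_singleton 0,
    Set.singleton_subset_iff.2 (zero_mem_starSet h0 hA)⟩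
  let state (n : ℕ) : State := next^[n] start
  have hstate (n : ℕ) : state (n + 1) = next (state n) := Function.iterate_succ_apply' next n start
  refine ⟨fun n => (state (n + 1)).1.1, fun n => ?_, fun n i hi => ?_⟩
  · change R (state (n + 1)).1.1 (state (n + 2)).1.1
    rw [hstate (n + 1)]
    exact hnextR _
  · suffices hmem : ∑ m ∈ Finset.range n, φ (i m) (state (m + 1)).1.1 ∈ (state n).1.2 from
      ((state n).2.2.2 hmem).1
    induction n with
    | zero => exact Finset.sum_range_zero _
    | succ n ih =>
      rw [Finset.sum_range_succ, hstate n, hnextS]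
      exact Set.mem_image2_of_mem (ih fun m hm => hi m (Nat.lt_succ_of_lt hm)) (hi n n.lt_succ_self)

/-! ### Block sequences -/

theorem exists_isBlockSeq_forall_TS_subset {k : ℕ} {u : ℕ → Ultrafilter (ℕ → ℕ)}
    (hu : IsCoherent u) (hsup : ∀ i ≤ k, ∀ j ≤ k, u i + u j = u (i ⊔ j)) {A : Set (ℕ → ℕ)}
    (hA : ∀ j ≤ k, A ∈ u j) : ∃ b, IsBlockSeq k b ∧ ∀ j, TS k j b ⊆ A := by
  have h0 : 0 ∈ A := by
    obtain ⟨a, ha, haA⟩ := ((hu.mem_gammaFIN 0).1.and (hA 0 k.zero_le)).exists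
    exact eq_zero_of_mem_FIN_zero ha ▸ haA
  have hblock : ∀ᶠ b in u k, ∀ᶠ b' in u k, b ∈ FIN k ∧ SuppLT b b' :=
    (hu.mem_gammaFIN k).1.mono fun b hb =>
      (eventually_suppLT (hu.mem_gammaFIN k) hb).mono fun _ h => ⟨hb, h⟩
  have hadd : ∀ V ∈ u '' Set.Iic k, ∀ W ∈ u '' Set.Iic k, V + W ∈ u '' Set.Iic k := by
    rintro _ ⟨i, hi, rfl⟩ _ ⟨j, hj, rfl⟩
    exact ⟨i ⊔ j, Set.mem_Iic.2 (sup_le hi hj), (hsup i hi j hj).symm⟩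
  have hmap : ∀ f ∈ truncatedTetris k, (u k).map (f ∘ ·) ∈ u '' Set.Iic k := by
    rintro f ⟨⟨j, hf⟩, -⟩
    exact ⟨j, hf.le, (hu.map_eq hf).symm⟩
  obtain ⟨b, hb, hsum⟩ := exists_seq_forall_sum_mem hblock ((Set.finite_Iic k).image u) hadd
    (finite_truncatedTetris k) hmap h0 (Set.forall_mem_image.2 hA)
  refine ⟨b, ⟨fun n => (hb n).1, fun n => (hb n).2⟩, ?_⟩
  rintro j _ ⟨-, n, js, fs, hfs, -, rfl⟩
  have htrunc (m : ℕ) : (fun x => fs m (min x k)) ∘ b m = fs m ∘ b m :=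
    funext fun l => congrArg (fs m) (min_eq_left ((hb m).1.1 l))
  simpa only [htrunc] using hsum (n + 1) (fun m x => fs m (min x k)) fun m hm =>
    (hfs m (Nat.le_of_lt_succ hm)).2.comp_min_mem_truncatedTetris

/-- Gowers' theorem for generalized tetris operations: for every finite coloring of
`FIN_{≤ k}` there is an infinite block sequence in `FIN k` all of whose tetris subspaces
`TS_j` are monochromatic, for `j = 1,…,k`. -/
theorem gowers_generalized_tetris (k : ℕ) (hk : 1 ≤ k) (r : ℕ) (c : (ℕ → ℕ) → ℕ)
    (hc : ∀ b : ℕ → ℕ, (∃ j, 1 ≤ j ∧ j ≤ k ∧ b ∈ FIN j) → c b < r) :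
    ∃ b : ℕ → ℕ → ℕ, IsBlockSeq k b ∧
      ∀ j, 1 ≤ j → j ≤ k → ∀ a ∈ TS k j b, ∀ a' ∈ TS k j b, c a = c a' := by
  obtain ⟨u, hu, hsup⟩ := exists_isCoherent_add_eq_sup k
  have hcolor : ∀ j, 1 ≤ j → j ≤ k → ∃ e, ∀ᶠ b in u j, c b = e := fun j h1 hj => by
    have hlt : ∀ᶠ b in u j, ∃ e ∈ Set.Iio r, c b = e :=
      (hu.mem_gammaFIN j).1.mono fun b hb => ⟨c b, hc b ⟨j, h1, hj, hb⟩, rfl⟩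
    obtain ⟨e, -, he⟩ := (Ultrafilter.eventually_exists_mem_iff (Set.finite_Iio r)).1 hlt
    exact ⟨e, he⟩
  choose! e he using hcolor
  let A : Set (ℕ → ℕ) := {a | ∀ j, 1 ≤ j → j ≤ k → a ∈ FIN j → c a = e j}
  have hA : ∀ j ≤ k, A ∈ u j := fun j hj => by
    rcases j.eq_zero_or_pos with rfl | hpos
    · filter_upwards [(hu.mem_gammaFIN 0).1] with b hb i h1 _ hbi
      exact absurd (eq_of_mem_FIN hb hbi) (by omega)
    · filter_upwards [(hu.mem_gammaFIN j).1, he j hpos hj] with b hb hbe i _ _ hbi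
      rw [hbe, eq_of_mem_FIN hb hbi]
  obtain ⟨b, hb, hbA⟩ := exists_isBlockSeq_forall_TS_subset hu hsup hA
  refine ⟨b, hb, fun j h1 hj a ha a' ha' => ?_⟩
  rw [hbA j ha j h1 hj ha.1, hbA j ha' j h1 hj ha'.1]
end

section
/- For all k, r, ℓ ≥ 1 there exists n ∈ ℕ such that for every r-coloring of FIN_{≤k}(n) (the union of FIN_j(n) for j = 1,…,k), there exists a block sequence (b_0, b_1, …, b_{ℓ-1}) in FIN_k(n) of length ℓ such that TS_j(b_0,…,b_{ℓ-1}) is monochromatic for every j = 1,2,…,k. -/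
/-!
A finitely supported function `ℕ → ℕ` is read as a word over the alphabet `ℕ`, with `0` a letter
like any other. Block sums become concatenations, and tetris operations become letterwise maps.

Let the tetris maps act on a compact right topological semigroup, for instance on the ultrafilters
on words. A sequence `u` with `f (u j) = u (f j)` for all tetris maps `f` is called coherent;
coherent sequences form a closed subsemigroup. If `v` is an idempotent coherent sequence, then the
sequences of products `v j * ⋯ * v 0` and `v 0 * ⋯ * v j` are coherent too, because tetris maps only
produce repetitions in these products. Used alternately, they give a coherent sequence with
`u i * u j = u (max i j)`, one index after the other.

For such ultrafilters the Galvin–Glazer argument yields, for any finite coloring of the words,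
an infinite sequence of words whose tetris combinations have a color depending on their maximum
only. The finitary statement follows by compactness: if every `n` admitted a bad coloring `c n`, a
pointwise limit of the `c n` would agree with some `c n` on the finitely many relevant tetris
combinations.
-/

/-- `FINf k n`: functions `{0,…,n-1} → {0,…,k}` with maximum value `k`
(encoded as functions `ℕ → ℕ` vanishing from `n` on). -/
def FINf (k n : ℕ) : Set (ℕ → ℕ) :=
  {b | (∀ i, b i ≤ k) ∧ (∀ i, n ≤ i → b i = 0) ∧ ∃ i, i < n ∧ b i = k}

/-- A block sequence `(b_0,…,b_{ℓ-1})` in `FINf k n`. -/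
def IsBlockSeqFin (k n ℓ : ℕ) (b : ℕ → ℕ → ℕ) : Prop :=
  (∀ i, i < ℓ → b i ∈ FINf k n) ∧ ∀ i, i + 1 < ℓ → SuppLT (b i) (b (i + 1))

/-- The tetris subspace `TS_j(b_0,…,b_{m-1})` of `FINf j n`: all elements of `FINf j n`
of the form `f_0 ∘ b_0 + ⋯ + f_{m'} ∘ b_{m'}` with `m' < m`, where `f_i` is a nondecreasing
surjection `{0,…,k} → {0,…,j_i}` and `max {j_0,…,j_{m'}} = j`. -/
def TSfin (k j n m : ℕ) (b : ℕ → ℕ → ℕ) : Set (ℕ → ℕ) :=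
  {a | a ∈ FINf j n ∧ ∃ m', m' < m ∧ ∃ (js : ℕ → ℕ) (fs : ℕ → ℕ → ℕ),
    (∀ i, i ≤ m' → js i ≤ j ∧ IsTetrisFn k (js i) (fs i)) ∧
    (∃ i, i ≤ m' ∧ js i = j) ∧
    a = ∑ i ∈ Finset.range (m' + 1), (fs i) ∘ (b i)}

open Filter Finset
open scoped Pointwise

attribute [local instance] Ultrafilter.semigroup

namespace Tetris

/-! ### Tetris maps and coherent sequences -/

/-- A tetris map: the common form, on all of `ℕ`, of the nondecreasing surjections
`{0,…,k} → {0,…,j}`. Such an `f` restricts to a nondecreasing surjection `{0,…,k} → {0,…,f k}` for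
every `k`, and all nondecreasing surjections between such intervals arise in this way. -/
structure IsTetrisMap (f : ℕ → ℕ) : Prop where
  map_zero : f 0 = 0
  map_succ : ∀ x, f (x + 1) = f x ∨ f (x + 1) = f x + 1

lemma IsTetrisMap.le {f : ℕ → ℕ} (hf : IsTetrisMap f) (x : ℕ) : f x ≤ x := by
  induction x with
  | zero => exact hf.map_zero.le
  | succ x ih => rcases hf.map_succ x with h | h <;> omega

section Semigroup

variable {X : Type*} [Semigroup X] {φ : (ℕ → ℕ) → X →ₙ* X} {L : ℕ → Set X} {u v : ℕ → X}

/-- A coherent sequence for an action `φ` of maps `ℕ → ℕ` on a semigroup: its `j`-th term lies in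
the prescribed set `L j`, and tetris maps act on the terms as they act on the indices. For
ultrafilters on words, `L j` consists of the ultrafilters living on the words with maximum `j`. -/
structure IsCoherent (φ : (ℕ → ℕ) → X →ₙ* X) (L : ℕ → Set X) (u : ℕ → X) : Prop where
  mem : ∀ j, u j ∈ L j
  apply_eq : ∀ f, IsTetrisMap f → ∀ j, φ f (u j) = u (f j)

lemma IsCoherent.mul (hL : ∀ i j, L i * L j ⊆ L (max i j)) (hu : IsCoherent φ L u)
    (hv : IsCoherent φ L v) : IsCoherent φ L (u * v) where
  mem j := by simpa using hL j j (Set.mul_mem_mul (hu.mem j) (hv.mem j))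
  apply_eq f hf j := by simp only [Pi.mul_apply, map_mul, hu.apply_eq f hf, hv.apply_eq f hf]

/-- The descending products `v j * v (j - 1) * ⋯ * v 0`, which absorb lower terms on the right. -/
def descProd (v : ℕ → X) : ℕ → X
  | 0 => v 0
  | j + 1 => v (j + 1) * descProd v j

/-- The ascending products `v 0 * v 1 * ⋯ * v j`, which absorb lower terms on the left. -/
def ascProd (v : ℕ → X) : ℕ → X
  | 0 => v 0
  | j + 1 => ascProd v j * v (j + 1)

lemma mul_descProd_self (hv : v * v = v) (j : ℕ) : v j * descProd v j = descProd v j := by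
  have hidem (i : ℕ) : v i * v i = v i := congrFun hv i
  cases j with
  | zero => exact hidem 0
  | succ j => rw [descProd, ← mul_assoc, hidem]

lemma ascProd_mul_self (hv : v * v = v) (j : ℕ) : ascProd v j * v j = ascProd v j := by
  have hidem (i : ℕ) : v i * v i = v i := congrFun hv i
  cases j with
  | zero => exact hidem 0
  | succ j => rw [ascProd, mul_assoc, hidem]

lemma isCoherent_descProd (hL : ∀ i j, L i * L j ⊆ L (max i j)) (hv : IsCoherent φ L v)
    (hidem : v * v = v) : IsCoherent φ L (descProd v) where
  mem j := by
    induction j with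
    | zero => exact hv.mem 0
    | succ j ih => simpa [descProd] using hL _ _ (Set.mul_mem_mul (hv.mem (j + 1)) ih)
  apply_eq f hf j := by
    induction j with
    | zero => simpa only [descProd, hf.map_zero] using hv.apply_eq f hf 0
    | succ j ih =>
      rw [descProd, map_mul, ih, hv.apply_eq f hf]
      rcases hf.map_succ j with h | h <;> rw [h]
      · exact mul_descProd_self hidem _
      · rfl

lemma isCoherent_ascProd (hL : ∀ i j, L i * L j ⊆ L (max i j)) (hv : IsCoherent φ L v)
    (hidem : v * v = v) : IsCoherent φ L (ascProd v) where
  mem j := by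
    induction j with
    | zero => exact hv.mem 0
    | succ j ih => simpa [ascProd] using hL _ _ (Set.mul_mem_mul ih (hv.mem (j + 1)))
  apply_eq f hf j := by
    induction j with
    | zero => simpa only [ascProd, hf.map_zero] using hv.apply_eq f hf 0
    | succ j ih =>
      rw [ascProd, map_mul, ih, hv.apply_eq f hf]
      rcases hf.map_succ j with h | h <;> rw [h]
      · exact ascProd_mul_self hidem _
      · rfl

/-! ### The absorption law -/

/-- The absorption law for the terms of `u` with index below `m`. -/
def AbsorbsBelow (m : ℕ) (u : ℕ → X) : Prop :=
  ∀ i < m, ∀ j < m, u i * u j = u (max i j)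

lemma AbsorbsBelow.mul_self {m : ℕ} (hu : AbsorbsBelow m u) {j : ℕ} (hj : j < m) :
    u j * u j = u j := by
  simpa using hu j hj j hj

lemma AbsorbsBelow.congr {m : ℕ} (hu : AbsorbsBelow m u) (h : ∀ j < m, v j = u j) :
    AbsorbsBelow m v := fun i hi j hj => by
  rw [h i hi, h j hj, h _ (max_lt hi hj), hu i hi j hj]

lemma AbsorbsBelow.descProd_eq {m : ℕ} (hv : AbsorbsBelow m v) : ∀ j < m, descProd v j = v j
  | 0, _ => rfl
  | j + 1, hj => by
    rw [descProd, hv.descProd_eq j (by omega), hv _ hj _ (by omega), max_eq_left (by omega)]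

lemma AbsorbsBelow.ascProd_eq {m : ℕ} (hv : AbsorbsBelow m v) : ∀ j < m, ascProd v j = v j
  | 0, _ => rfl
  | j + 1, hj => by
    rw [ascProd, hv.ascProd_eq j (by omega), hv _ (by omega) _ hj, max_eq_right (by omega)]

lemma AbsorbsBelow.descProd_mul {m : ℕ} (hv : AbsorbsBelow m v) {j : ℕ} (hj : j < m) :
    descProd v m * v j = descProd v m := by
  obtain ⟨m, rfl⟩ := Nat.exists_eq_add_one_of_ne_zero (Nat.ne_zero_of_lt hj)
  rw [descProd, hv.descProd_eq m (by omega), mul_assoc, hv _ (by omega) _ hj,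
    max_eq_left (by omega)]

lemma AbsorbsBelow.mul_ascProd {m : ℕ} (hv : AbsorbsBelow m v) {j : ℕ} (hj : j < m) :
    v j * ascProd v m = ascProd v m := by
  obtain ⟨m, rfl⟩ := Nat.exists_eq_add_one_of_ne_zero (Nat.ne_zero_of_lt hj)
  rw [ascProd, hv.ascProd_eq m (by omega), ← mul_assoc, hv _ hj _ (by omega),
    max_eq_right (by omega)]

lemma ascProd_mul_of_mul_eq {m j : ℕ} (hj : j < m) (h : v m * v j = v m) :
    ascProd v m * v j = ascProd v m := by
  obtain ⟨m, rfl⟩ := Nat.exists_eq_add_one_of_ne_zero (Nat.ne_zero_of_lt hj)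
  rw [ascProd, mul_assoc, h]

lemma AbsorbsBelow.ascProd_mul_ascProd {m : ℕ} (hv : AbsorbsBelow m v) (hidem : v * v = v)
    (h : ∀ j < m, v m * v j = v m) : ascProd v m * ascProd v m = ascProd v m := by
  cases m with
  | zero => exact congrFun hidem 0
  | succ m =>
    have hm : ascProd v (m + 1) * ascProd v m = ascProd v (m + 1) := by
      rw [hv.ascProd_eq m (by omega), ascProd_mul_of_mul_eq (by omega) (h m (by omega))]
    calc ascProd v (m + 1) * (ascProd v m * v (m + 1))
        = ascProd v (m + 1) * v (m + 1) := by rw [← mul_assoc, hm]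
      _ = ascProd v (m + 1) := ascProd_mul_self hidem _

lemma absorbsBelow_ascProd {m : ℕ} (hv : AbsorbsBelow m v) (hidem : v * v = v)
    (h : ∀ j < m, v m * v j = v m) : AbsorbsBelow (m + 1) (ascProd v) := by
  intro i hi j hj
  rcases Nat.lt_succ_iff_lt_or_eq.1 hi with hi | rfl <;>
    rcases Nat.lt_succ_iff_lt_or_eq.1 hj with hj | rfl
  · exact hv.congr hv.ascProd_eq i hi j hj
  · rw [hv.ascProd_eq i hi, hv.mul_ascProd hi, max_eq_right hi.le]
  · rw [hv.ascProd_eq j hj, ascProd_mul_of_mul_eq hj (h j hj), max_eq_left hj.le]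
  · rw [hv.ascProd_mul_ascProd hidem h, max_self]

end Semigroup

section CompactSemigroup

variable {X : Type*} [Semigroup X] [TopologicalSpace X] [T2Space X]
  {φ : (ℕ → ℕ) → X →ₙ* X} {L : ℕ → Set X} {u : ℕ → X}

lemma isClosed_setOf_isCoherent (hφ : ∀ f, Continuous (φ f)) (hLc : ∀ j, IsClosed (L j)) :
    IsClosed {u | IsCoherent φ L u} := by
  have heq : {u | IsCoherent φ L u} = (⋂ j, {u | u j ∈ L j}) ∩
      ⋂ f, ⋂ (_ : IsTetrisMap f), ⋂ j, {u | φ f (u j) = u (f j)} := by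
    ext u
    simp only [Set.mem_inter_iff, Set.mem_iInter, Set.mem_ofPred_eq]
    exact ⟨fun hu => ⟨hu.mem, hu.apply_eq⟩, fun hu => ⟨hu.1, hu.2⟩⟩
  rw [heq]
  exact (isClosed_iInter fun j => (hLc j).preimage (continuous_apply j)).inter <|
    isClosed_iInter fun f => isClosed_iInter fun _ => isClosed_iInter fun j =>
      isClosed_eq ((hφ f).comp (continuous_apply j)) (continuous_apply (f j))

variable [CompactSpace X]

lemma IsCoherent.exists_idempotent_mem (hX : ∀ r : X, Continuous (· * r))
    (hφ : ∀ f, Continuous (φ f)) (hLc : ∀ j, IsClosed (L j))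
    (hL : ∀ i j, L i * L j ⊆ L (max i j)) (hu : IsCoherent φ L u) {K : Set (ℕ → X)}
    (huK : u ∈ K) (hK : IsClosed K) (hKmul : ∀ᵉ (x ∈ K) (y ∈ K), x * y ∈ K) :
    ∃ v ∈ K, IsCoherent φ L v ∧ v * v = v := by
  obtain ⟨v, ⟨hv, hvK⟩, hidem⟩ := exists_idempotent_in_compact_subsemigroup
    (fun r => continuous_pi fun j => (hX (r j)).comp (continuous_apply j))
    ({v | IsCoherent φ L v} ∩ K) ⟨u, hu, huK⟩
    ((isClosed_setOf_isCoherent hφ hLc).inter hK).isCompact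
    fun x hx y hy => ⟨hx.1.mul hL hy.1, hKmul x hx.2 y hy.2⟩
  exact ⟨v, hvK, hv, hidem⟩

/-- Absorption of lower terms on the right is a closed condition preserved by products, so it can
be secured together with idempotence; absorption on the left is not closed. -/
lemma IsCoherent.exists_idempotent_mul_eq (hX : ∀ r : X, Continuous (· * r))
    (hφ : ∀ f, Continuous (φ f)) (hLc : ∀ j, IsClosed (L j))
    (hL : ∀ i j, L i * L j ⊆ L (max i j)) (hu : IsCoherent φ L u) {m : ℕ}
    (hum : AbsorbsBelow m u) :
    ∃ v, IsCoherent φ L v ∧ v * v = v ∧ AbsorbsBelow m v ∧ ∀ j < m, v m * v j = v m := by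
  let K : Set (ℕ → X) := (Set.Iio m).pi fun j => {u j}
  let R : Set (ℕ → X) := ⋂ j ∈ Set.Iio m, {v | v m * u j = v m}
  have hKc : IsClosed K := isClosed_set_pi fun _ _ => isClosed_singleton
  have hRc : IsClosed R := isClosed_biInter fun j _ =>
    isClosed_eq ((hX (u j)).comp (continuous_apply m)) (continuous_apply m)
  have hKmul : ∀ᵉ (x ∈ K) (y ∈ K), x * y ∈ K := fun x hx y hy j hj => by
    rw [Pi.mul_apply, hx j hj, hy j hj]
    exact hum.mul_self hj
  have hRmul : ∀ᵉ (x ∈ R) (y ∈ R), x * y ∈ R := fun x _ y hy =>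
    Set.mem_iInter₂_of_mem fun j hj => by
      have hyj : y m * u j = y m := Set.mem_iInter₂.1 hy j hj
      simp only [Set.mem_ofPred_eq, Pi.mul_apply, mul_assoc, hyj]
  obtain ⟨v, hvu, hv, hv_idem⟩ := hu.exists_idempotent_mem hX hφ hLc hL (K := K)
    (fun _ _ => rfl) hKc hKmul
  have hvm : AbsorbsBelow m v := hum.congr hvu
  have hdescK : descProd v ∈ K := fun j hj => (hvm.descProd_eq j hj).trans (hvu j hj)
  have hdescR : descProd v ∈ R := Set.mem_iInter₂_of_mem fun j hj => by
    rw [Set.mem_ofPred_eq, ← hvu j hj, hvm.descProd_mul hj]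
  obtain ⟨w, ⟨hwu, hwR⟩, hw, hw_idem⟩ := (isCoherent_descProd hL hv hv_idem).exists_idempotent_mem
    hX hφ hLc hL (Set.mem_inter hdescK hdescR) (hKc.inter hRc)
    fun x hx y hy => ⟨hKmul x hx.1 y hy.1, hRmul x hx.2 y hy.2⟩
  refine ⟨w, hw, hw_idem, hum.congr hwu, fun j hj => ?_⟩
  rw [hwu j hj]
  exact Set.mem_iInter₂.1 hwR j hj

theorem IsCoherent.exists_absorbsBelow (hX : ∀ r : X, Continuous (· * r))
    (hφ : ∀ f, Continuous (φ f)) (hLc : ∀ j, IsClosed (L j))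
    (hL : ∀ i j, L i * L j ⊆ L (max i j)) (hu : IsCoherent φ L u) (m : ℕ) :
    ∃ v, IsCoherent φ L v ∧ AbsorbsBelow m v := by
  induction m with
  | zero => exact ⟨u, hu, fun i hi => absurd hi i.not_lt_zero⟩
  | succ m ih =>
    obtain ⟨v, hv, hvm⟩ := ih
    obtain ⟨w, hw, hidem, hwm, hright⟩ := hv.exists_idempotent_mul_eq hX hφ hLc hL hvm
    exact ⟨ascProd w, isCoherent_ascProd hL hw hidem, absorbsBelow_ascProd hwm hidem hright⟩

end CompactSemigroup

/-! ### Ultrafilters on words -/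

section Ultrafilter

attribute [local instance] Ultrafilter.mul

/-- The homomorphism between semigroups of ultrafilters induced by a homomorphism. -/
def ultrafilterMap {M N : Type*} [Mul M] [Mul N] (f : M →ₙ* N) :
    Ultrafilter M →ₙ* Ultrafilter N where
  toFun := Ultrafilter.map f
  map_mul' u v := Ultrafilter.coe_inj.mp <| Filter.ext' fun p => by
    simp only [Ultrafilter.coe_map, eventually_map, Ultrafilter.eventually_mul, map_mul]

end Ultrafilter

lemma exists_eventually_eq {α κ : Type*} [Finite κ] (u : Ultrafilter α) (c : α → κ) :
    ∃ y, ∀ᶠ a in u, c a = y := by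
  obtain ⟨y, hy⟩ := (u.map c).eq_pure_of_finite
  have hmem : {y} ∈ u.map c := hy ▸ Set.mem_singleton y
  exact ⟨y, hmem⟩

lemma continuous_ultrafilter_map {α β : Type*} (f : α → β) : Continuous (Ultrafilter.map f) :=
  ultrafilterBasis_is_basis.continuous_iff.2 <| Set.forall_mem_range.2 fun s =>
    ultrafilter_isOpen_basic (f ⁻¹' s)

/-- The words over `ℕ` with maximum `j`, which encode the elements of `FIN_j`. The empty word is
in none of these sets. -/
def level (j : ℕ) : Set (FreeMonoid ℕ) := {w | IsGreatest {x | x ∈ w} j}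

lemma mul_mem_level {i j : ℕ} {v w : FreeMonoid ℕ} (hv : v ∈ level i) (hw : w ∈ level j) :
    v * w ∈ level (max i j) := by
  have hunion : {x | x ∈ v * w} = {x | x ∈ v} ∪ {x | x ∈ w} := Set.ext fun _ => FreeMonoid.mem_mul
  rw [level, Set.mem_ofPred_eq, hunion]
  exact IsGreatest.union hv hw

/-- The ultrafilters living on the words with maximum `j`. -/
def levelUltrafilters (j : ℕ) : Set (Ultrafilter (FreeMonoid ℕ)) := {u | level j ∈ u}

lemma levelUltrafilters_mul_subset (i j : ℕ) :
    levelUltrafilters i * levelUltrafilters j ⊆ levelUltrafilters (max i j) := by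
  rintro _ ⟨u, hu, v, hv, rfl⟩
  change ∀ᶠ x in (u * v : Ultrafilter _), x ∈ level (max i j)
  rw [Ultrafilter.eventually_mul]
  filter_upwards [hu] with x hx
  filter_upwards [hv] with y hy using mul_mem_level hx hy

/-- The action of maps `ℕ → ℕ` on ultrafilters on words, induced by the letterwise action. -/
def letterwise (f : ℕ → ℕ) : Ultrafilter (FreeMonoid ℕ) →ₙ* Ultrafilter (FreeMonoid ℕ) :=
  ultrafilterMap (FreeMonoid.map f : FreeMonoid ℕ →ₙ* FreeMonoid ℕ)

lemma isCoherent_pure_of :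
    IsCoherent letterwise levelUltrafilters fun j => pure (FreeMonoid.of j) where
  mem j := by
    change FreeMonoid.of j ∈ level j
    simp [level, FreeMonoid.mem_of]
  apply_eq f _ j := Ultrafilter.map_pure (FreeMonoid.map f) (FreeMonoid.of j)

theorem exists_isCoherent_ultrafilter (m : ℕ) :
    ∃ u, IsCoherent letterwise levelUltrafilters u ∧ AbsorbsBelow m u :=
  isCoherent_pure_of.exists_absorbsBelow Ultrafilter.continuous_mul_left
    (fun _ => continuous_ultrafilter_map _) (fun j => ultrafilter_isClosed_basic (level j))
    levelUltrafilters_mul_subset m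

/-! ### The Galvin–Glazer construction -/

section GalvinGlazer

variable {M ι Λ : Type*} [Monoid M] [SemilatticeSup ι] [Finite ι] [Finite Λ]
  {u : ι → Ultrafilter M} {v : Ultrafilter M} {φ : Λ → M → M} {h : Λ → ι}

lemma exists_mem_forall_mul_mem (hu : ∀ i j, u i * u j = u (i ⊔ j))
    (hφ : ∀ a, v.map (φ a) = u (h a)) {B : Set M} (hB : B ∈ v) {A : ι → Set M}
    (hA : ∀ i, A i ∈ u i) :
    ∃ x ∈ B, (∀ a, φ a x ∈ A (h a)) ∧
      ∃ A' : ι → Set M, (∀ i, A' i ∈ u i) ∧ ∀ a i, ∀ y ∈ A' i, φ a x * y ∈ A (h a ⊔ i) := by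
  have hsingle : ∀ᶠ x in v, ∀ a, φ a x ∈ A (h a) := eventually_all.2 fun a => by
    have hmem : A (h a) ∈ v.map (φ a) := hφ a ▸ hA (h a)
    exact hmem
  have hpair : ∀ᶠ x in v, ∀ i, ∀ᶠ y in u i, ∀ a, φ a x * y ∈ A (h a ⊔ i) := by
    simp only [eventually_all]
    intro i a
    have hmem : ∀ᶠ z in (v.map (φ a) * u i : Ultrafilter M), z ∈ A (h a ⊔ i) := by
      rw [hφ, hu]
      exact hA _
    exact (Ultrafilter.eventually_mul _ _ _).1 hmem
  obtain ⟨x, hxB, hx, hxy⟩ := (Eventually.and hB (hsingle.and hpair)).exists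
  exact ⟨x, hxB, hx, fun i => {y | ∀ a, φ a x * y ∈ A (h a ⊔ i)}, hxy, fun a i y hy => hy a⟩

theorem exists_seq_forall_prod_mem [OrderBot ι] (hu : ∀ i j, u i * u j = u (i ⊔ j))
    (hφ : ∀ a, v.map (φ a) = u (h a)) {B : Set M} (hB : B ∈ v) {A : ι → Set M}
    (hA : ∀ i, A i ∈ u i) :
    ∃ w : ℕ → M, (∀ n, w n ∈ B) ∧ ∀ m (f : Fin (m + 1) → Λ),
      (List.ofFn fun i => φ (f i) (w i)).prod ∈ A (univ.sup fun i => h (f i)) := by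
  have hstep (A : {A : ι → Set M // ∀ i, A i ∈ u i}) :
      ∃ x ∈ B, (∀ a, φ a x ∈ A.1 (h a)) ∧ ∃ A' : {A : ι → Set M // ∀ i, A i ∈ u i},
        ∀ a i, ∀ y ∈ A'.1 i, φ a x * y ∈ A.1 (h a ⊔ i) := by
    obtain ⟨x, hxB, hx, A', hA', hxy⟩ := exists_mem_forall_mul_mem hu hφ hB A.2
    exact ⟨x, hxB, hx, ⟨A', hA'⟩, hxy⟩
  choose x hxB hx next hnext using hstep
  refine ⟨fun n => x (next^[n] ⟨A, hA⟩), fun n => hxB _, fun m => ?_⟩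
  suffices hprod : ∀ (A : {A : ι → Set M // ∀ i, A i ∈ u i}) (f : Fin (m + 1) → Λ),
      (List.ofFn fun i => φ (f i) (x (next^[i] A))).prod ∈ A.1 (univ.sup fun i => h (f i)) from
    hprod ⟨A, hA⟩
  induction m with
  | zero => exact fun A f => by simpa using hx A (f 0)
  | succ m ih =>
    intro A f
    rw [List.ofFn_succ, List.prod_cons, Fin.univ_succ, sup_cons, sup_map]
    exact hnext A (f 0) _ _ (ih (next A) fun i => f i.succ)

end GalvinGlazer

/-! ### Words with monochromatic tetris combinations -/

/-- The tetris maps that are constant from `k` on: a finite set containing an extension of every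
nondecreasing surjection with domain `{0,…,k}`. -/
def tetrisMaps (k : ℕ) : Set (ℕ → ℕ) := {f | IsTetrisMap f ∧ ∀ x, f x = f (min x k)}

lemma finite_tetrisMaps (k : ℕ) : (tetrisMaps k).Finite := by
  have hmaps : Set.MapsTo (fun (f : ℕ → ℕ) (i : Fin (k + 1)) => f i) (tetrisMaps k)
      {g | ∀ i, g i ∈ Set.Iic k} := fun f hf i => (hf.1.le i).trans (Nat.lt_succ_iff.1 i.2)
  refine Set.Finite.of_injOn hmaps (fun f hf g hg hfg => funext fun x => ?_)
    (Set.Finite.pi' fun _ => Set.finite_Iic k)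
  rw [hf.2 x, hg.2 x]
  exact congrFun hfg ⟨min x k, by omega⟩

/-- The number `j` such that `f` restricts to a surjection `{0,…,k} → {0,…,j}`. -/
def top {k : ℕ} (f : tetrisMaps k) : Fin (k + 1) :=
  ⟨f.1 k, Nat.lt_succ_iff.2 (f.2.1.le k)⟩

theorem exists_words_forall_color_eq {κ : Type*} [Finite κ] (k : ℕ) (c : FreeMonoid ℕ → κ) :
    ∃ (w : ℕ → FreeMonoid ℕ) (g : Fin (k + 1) → κ), (∀ i, w i ∈ level k) ∧
      ∀ m (f : Fin (m + 1) → tetrisMaps k),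
        c (List.ofFn fun i => FreeMonoid.map (f i).1 (w i)).prod =
          g (univ.sup fun i => top (f i)) := by
  obtain ⟨u, hu, hmax⟩ := exists_isCoherent_ultrafilter (k + 1)
  have : Finite (tetrisMaps k) := (finite_tetrisMaps k).to_subtype
  choose g hg using fun j : Fin (k + 1) => exists_eventually_eq (u j) c
  obtain ⟨w, hw, hprod⟩ := exists_seq_forall_prod_mem (u := fun j : Fin (k + 1) => u j)
    (φ := fun f : tetrisMaps k => FreeMonoid.map f.1) (h := top)
    (fun i j => (hmax i i.2 j j.2).trans (congrArg u (Fin.coe_max i j).symm))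
    (fun f => hu.apply_eq f.1 f.2.1 k) (hu.mem k) hg
  exact ⟨w, g, hw, hprod⟩

/-! ### From words to block sequences -/

/-- The function `ℕ → ℕ` that reads the word `w` from position `o` on and is zero elsewhere. -/
def place (o : ℕ) (w : FreeMonoid ℕ) (x : ℕ) : ℕ :=
  if x < o then 0 else (FreeMonoid.toList w).getD (x - o) 0

lemma place_one (o : ℕ) : place o 1 = 0 := by
  funext x
  simp [place]

lemma place_mul (o : ℕ) (v w : FreeMonoid ℕ) :
    place o (v * w) = place o v + place (o + v.length) w := by
  funext x
  have hlen : v.length = (FreeMonoid.toList v).length := rfl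
  simp only [place, Pi.add_apply, FreeMonoid.toList_mul, hlen]
  split_ifs with hx hx' hx'
  · rfl
  · omega
  · rw [List.getD_append _ _ _ _ (by omega), add_zero]
  · rw [List.getD_append_right _ _ _ _ (by omega),
      List.getD_eq_default (FreeMonoid.toList v) _ (by omega), zero_add, Nat.sub_sub]

lemma place_map (o : ℕ) {f : ℕ → ℕ} (hf : f 0 = 0) (w : FreeMonoid ℕ) :
    place o (FreeMonoid.map f w) = f ∘ place o w := by
  funext x
  simp only [place, Function.comp, FreeMonoid.toList_map]
  split_ifs
  · exact hf.symm
  · conv_lhs => rw [← hf]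
    exact List.getD_map ..

lemma le_and_lt_of_place_ne_zero {o : ℕ} {w : FreeMonoid ℕ} {x : ℕ} (h : place o w x ≠ 0) :
    o ≤ x ∧ x < o + w.length := by
  contrapose! h
  have hlen : w.length = (FreeMonoid.toList w).length := rfl
  rw [place]
  split_ifs with hx
  · rfl
  · exact List.getD_eq_default _ _ (by have := h (by omega); omega)

lemma place_le {o k : ℕ} {w : FreeMonoid ℕ} (hw : w ∈ level k) (x : ℕ) : place o w x ≤ k := by
  rw [place]
  split_ifs
  · exact k.zero_le
  · rcases lt_or_ge (x - o) (FreeMonoid.toList w).length with h | h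
    · rw [List.getD_eq_getElem _ _ h]
      exact hw.2 (List.getElem_mem h)
    · rw [List.getD_eq_default _ _ h]
      exact k.zero_le

lemma exists_place_eq (o : ℕ) {k : ℕ} {w : FreeMonoid ℕ} (hw : w ∈ level k) :
    ∃ x < o + w.length, place o w x = k := by
  obtain ⟨i, hi, hik⟩ := List.getElem_of_mem hw.1
  refine ⟨o + i, Nat.add_lt_add_left hi o, ?_⟩
  rw [place, if_neg (by omega), Nat.add_sub_cancel_left, List.getD_eq_getElem _ _ hi, hik]

lemma place_mem_FINf {o k n : ℕ} {w : FreeMonoid ℕ} (hw : w ∈ level k) (hn : o + w.length ≤ n) :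
    place o w ∈ FINf k n := by
  refine ⟨place_le hw, fun x hx => ?_, ?_⟩
  · by_contra h
    have := le_and_lt_of_place_ne_zero h
    omega
  · obtain ⟨x, hx, hxk⟩ := exists_place_eq o hw
    exact ⟨x, hx.trans_le hn, hxk⟩

lemma suppLT_place {o o' : ℕ} {v w : FreeMonoid ℕ} (h : o + v.length ≤ o') :
    SuppLT (place o v) (place o' w) := fun x hx x' hx' => by
  have := le_and_lt_of_place_ne_zero hx
  have := le_and_lt_of_place_ne_zero hx'
  omega

/-- The starting position of `w i` in the concatenation of the words `w 0, w 1, …`. -/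
def offset (w : ℕ → FreeMonoid ℕ) (i : ℕ) : ℕ := ∑ j ∈ range i, (w j).length

lemma offset_succ (w : ℕ → FreeMonoid ℕ) (i : ℕ) :
    offset w (i + 1) = offset w i + (w i).length :=
  sum_range_succ _ _

lemma monotone_offset (w : ℕ → FreeMonoid ℕ) : Monotone (offset w) :=
  monotone_nat_of_le_succ fun i => by simp [offset_succ]

/-- The block sequence obtained by writing the words `w 0, w 1, …` one after the other. -/
def blocks (w : ℕ → FreeMonoid ℕ) (i : ℕ) : ℕ → ℕ := place (offset w i) (w i)

lemma isBlockSeqFin_blocks {k n ℓ : ℕ} {w : ℕ → FreeMonoid ℕ} (hw : ∀ i, w i ∈ level k)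
    (hn : offset w ℓ ≤ n) : IsBlockSeqFin k n ℓ (blocks w) := by
  refine ⟨fun i hi => place_mem_FINf (hw i) ?_, fun i _ => suppLT_place (offset_succ w i).ge⟩
  rw [← offset_succ]
  exact (monotone_offset w hi).trans hn

lemma length_prod_map (w : ℕ → FreeMonoid ℕ) (m : ℕ) (f : Fin m → ℕ → ℕ) :
    (List.ofFn fun i => FreeMonoid.map (f i) (w i)).prod.length = offset w m := by
  induction m with
  | zero => rfl
  | succ m ih =>
    rw [List.ofFn_succ', List.concat_eq_append, List.prod_append, List.prod_singleton,
      FreeMonoid.length_mul, offset_succ]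
    exact congrArg₂ _ (ih fun i => f i.castSucc) (List.length_map _)

lemma place_prod_map (w : ℕ → FreeMonoid ℕ) (m : ℕ) (f : Fin m → ℕ → ℕ) (hf : ∀ i, f i 0 = 0) :
    place 0 (List.ofFn fun i => FreeMonoid.map (f i) (w i)).prod = ∑ i, f i ∘ blocks w i := by
  induction m with
  | zero => exact place_one 0
  | succ m ih =>
    have hlen := length_prod_map w m fun i => f i.castSucc
    rw [List.ofFn_succ', List.concat_eq_append, List.prod_append, List.prod_singleton, place_mul,
      place_map _ (hf _), Fin.sum_univ_castSucc]
    simp only [Fin.val_castSucc, Fin.val_last]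
    rw [← ih (fun i => f i.castSucc) fun i => hf _, hlen, zero_add, blocks]

/-! ### Tetris subspaces -/

lemma _root_.IsTetrisFn.apply_top {k j : ℕ} {f : ℕ → ℕ} (hf : IsTetrisFn k j f) : f k = j := by
  obtain ⟨hmono, hle, hsurj⟩ := hf
  obtain ⟨i, hi, rfl⟩ := hsurj j le_rfl
  exact (hle k le_rfl).antisymm (hmono k i hi le_rfl)

lemma _root_.IsTetrisFn.comp_min_mem_tetrisMaps {k j : ℕ} {f : ℕ → ℕ} (hf : IsTetrisFn k j f) :
    (fun x => f (min x k)) ∈ tetrisMaps k := by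
  obtain ⟨hmono, hle, hsurj⟩ := hf
  refine ⟨⟨?_, fun x => ?_⟩, fun x => by simp⟩
  · obtain ⟨i, hi, hi0⟩ := hsurj 0 j.zero_le
    rw [Nat.zero_min]
    exact Nat.le_zero.1 (hi0 ▸ hmono i 0 i.zero_le hi)
  · rcases le_or_gt k x with hx | hx
    · left
      rw [min_eq_right hx, min_eq_right (by omega)]
    · rw [min_eq_left hx.le, min_eq_left (by omega)]
      have hstep : f x ≤ f (x + 1) := hmono (x + 1) x (by omega) (by omega)
      by_contra hjump
      obtain ⟨i, hi, hfi⟩ := hsurj (f x + 1) (by have := hle (x + 1) (by omega); omega)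
      rcases le_or_gt i x with hix | hix
      · have := hmono x i hix (by omega)
        omega
      · have := hmono i (x + 1) hix hi
        omega

lemma exists_tetrisMaps_of_mem_TSfin {k n ℓ : ℕ} {j : Fin (k + 1)} {a : ℕ → ℕ} {b : ℕ → ℕ → ℕ}
    (hb : ∀ i < ℓ, ∀ x, b i x ≤ k) (ha : a ∈ TSfin k j n ℓ b) :
    ∃ m < ℓ, ∃ f : Fin (m + 1) → tetrisMaps k,
      (univ.sup fun i => top (f i)) = j ∧ a = ∑ i, (f i).1 ∘ b i := by
  obtain ⟨-, m, hm, js, fs, hfs, ⟨i₀, hi₀, hi₀j⟩, rfl⟩ := ha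
  have hfs' (i : Fin (m + 1)) := hfs i (Nat.lt_succ_iff.1 i.2)
  let f (i : Fin (m + 1)) : tetrisMaps k := ⟨_, (hfs' i).2.comp_min_mem_tetrisMaps⟩
  have htop (i : Fin (m + 1)) : (top (f i) : ℕ) = js i := by
    simp only [top, f, min_self, (hfs' i).2.apply_top]
  refine ⟨m, hm, f, le_antisymm (Finset.sup_le fun i _ => ?_) ?_, ?_⟩
  · rw [Fin.le_def, htop]
    exact (hfs' i).1
  · have hj : top (f ⟨i₀, Nat.lt_succ_iff.2 hi₀⟩) = j := Fin.ext ((htop _).trans hi₀j)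
    exact hj ▸ le_sup (f := fun i => top (f i)) (mem_univ _)
  · rw [sum_range]
    refine sum_congr rfl fun i _ => funext fun x => ?_
    simp only [Function.comp, f, min_eq_left (hb i (by omega) x)]

/-- Functions `{0,…,N-1} → {0,…,k}`, extended by zero as in `FINf`. -/
def boundedFuns (k N : ℕ) : Set (ℕ → ℕ) := {a | (∀ i, a i ≤ k) ∧ ∀ i, N ≤ i → a i = 0}

lemma finite_boundedFuns (k N : ℕ) : (boundedFuns k N).Finite := by
  have hmaps : Set.MapsTo (fun (a : ℕ → ℕ) (i : Fin N) => a i) (boundedFuns k N)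
      {g | ∀ i, g i ∈ Set.Iic k} := fun a ha i => ha.1 i
  refine Set.Finite.of_injOn hmaps (fun a ha a' ha' h => funext fun x => ?_)
    (Set.Finite.pi' fun _ => Set.finite_Iic k)
  rcases lt_or_ge x N with hx | hx
  · exact congrFun h ⟨x, hx⟩
  · rw [ha.2 x hx, ha'.2 x hx]

lemma TSfin_subset_boundedFuns {k n N ℓ : ℕ} {j : Fin (k + 1)} {b : ℕ → ℕ → ℕ}
    (hb : IsBlockSeqFin k N ℓ b) : TSfin k j n ℓ b ⊆ boundedFuns k N := fun a ha => by
  refine ⟨fun x => (ha.1.1 x).trans (Nat.lt_succ_iff.1 j.2), fun x hx => ?_⟩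
  obtain ⟨m, hm, f, -, rfl⟩ := exists_tetrisMaps_of_mem_TSfin (fun i hi => (hb.1 i hi).1) ha
  rw [Finset.sum_apply]
  refine sum_eq_zero fun i _ => ?_
  rw [Function.comp_apply, (hb.1 i (by omega)).2.1 x hx]
  exact (f i).2.1.map_zero

theorem exists_blockSeq_forall_TSfin_color_eq {κ : Type*} [Finite κ] (k : ℕ)
    (c : (ℕ → ℕ) → κ) :
    ∃ (b : ℕ → ℕ → ℕ) (g : Fin (k + 1) → κ), (∀ ℓ, ∃ N, ∀ n ≥ N, IsBlockSeqFin k n ℓ b) ∧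
      ∀ (j : Fin (k + 1)) n ℓ, ∀ a ∈ TSfin k j n ℓ b, c a = g j := by
  obtain ⟨w, g, hw, hg⟩ := exists_words_forall_color_eq k fun w => c (place 0 w)
  refine ⟨blocks w, g, fun ℓ => ⟨offset w ℓ, fun n hn => isBlockSeqFin_blocks hw hn⟩,
    fun j n ℓ a ha => ?_⟩
  obtain ⟨m, -, f, rfl, rfl⟩ := exists_tetrisMaps_of_mem_TSfin (b := blocks w)
    (fun i _ => place_le (hw i)) ha
  rw [← hg m f, place_prod_map w _ _ fun i => (f i).2.1.map_zero]

/-! ### Compactness -/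

theorem exists_limit_coloring {α κ : Type*} [Finite κ] (c : ℕ → α → κ) :
    ∃ d : α → κ, ∀ s : Set α, s.Finite → ∃ᶠ n in atTop, ∀ a ∈ s, c n a = d a := by
  choose d hd using fun a => exists_eventually_eq (hyperfilter ℕ) fun n => c n a
  exact ⟨d, fun s hs => ((eventually_all_finite hs).2 fun a _ => hd a).frequently.filter_mono
    Nat.hyperfilter_le_atTop⟩

end Tetris

open Tetris

/-- Finitary Gowers' theorem for generalized tetris operations. -/
theorem gowers_generalized_tetris_finitary (k r ℓ : ℕ) (hk : 1 ≤ k) (hr : 1 ≤ r)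
    (hℓ : 1 ≤ ℓ) :
    ∃ n : ℕ, ∀ c : (ℕ → ℕ) → ℕ,
      (∀ b : ℕ → ℕ, (∃ j, 1 ≤ j ∧ j ≤ k ∧ b ∈ FINf j n) → c b < r) →
      ∃ b : ℕ → ℕ → ℕ, IsBlockSeqFin k n ℓ b ∧
        ∀ j, 1 ≤ j → j ≤ k →
          ∀ a ∈ TSfin k j n ℓ b, ∀ a' ∈ TSfin k j n ℓ b, c a = c a' := by
  have : NeZero r := ⟨Nat.one_le_iff_ne_zero.1 hr⟩
  by_contra! hbad
  choose c hc hbad using hbad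
  obtain ⟨d, hd⟩ := exists_limit_coloring fun n a => Fin.ofNat r (c n a)
  obtain ⟨b, g, hb, hg⟩ := exists_blockSeq_forall_TSfin_color_eq k d
  obtain ⟨N, hN⟩ := hb ℓ
  obtain ⟨n, hcd, hn⟩ :=
    ((hd _ (finite_boundedFuns k N)).and_eventually (eventually_ge_atTop N)).exists
  obtain ⟨j, hj, hjk, a, ha, a', ha', hne⟩ := hbad n b (hN n hn)
  have hcolor : ∀ a ∈ TSfin k j n ℓ b, c n a = g ⟨j, Nat.lt_succ_iff.2 hjk⟩ := fun a ha => by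
    have haN : a ∈ boundedFuns k N :=
      TSfin_subset_boundedFuns (j := ⟨j, Nat.lt_succ_iff.2 hjk⟩) (hN N le_rfl) ha
    rw [← hg _ n ℓ a ha, ← hcd a haN, Fin.val_ofNat, Nat.mod_eq_of_lt (hc n a ⟨j, hj, hjk, ha.1⟩)]
  exact hne ((hcolor a ha).trans (hcolor a' ha').symm)
end
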